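/- arXiv:math/0602272 — 2 statements merged into one kernel-verified Lean document; each statement's English description precedes it below -/
import Mathlib

section
/- Let R be a ring, let C₁ →^{f₁} C₂ →^{f₂} C₃ → ⋯ be a countable direct system of finitely generated R-modules, let ε_n : C_n → ⊕_{k∈ℕ} C_k be the canonical inclusions, and let φ : ⊕_{n∈ℕ} C_n → ⊕_{n∈ℕ} C_n be the homomorphism determined by φ∘ε_n = ε_n − ε_{n+1}∘f_n. Let M be an R-module. Then the following are equivalent: (1) for every set I, the map Hom_R(φ, M^{(I)}) : Hom_R(⊕_{n∈ℕ} C_n, M^{(I)}) → Hom_R(⊕_{n∈ℕ} C_n, M^{(I)}), g ↦ g∘φ, is surjective; (2) Hom_R(φ, M^{(ℕ)}) is surjective; (3) the tower (Hom_R(C_n, M), Hom_R(f_n, M))_{n∈ℕ} satisfies the Mittag-Leffler condition; (4) for every family of homomorphisms γ_n : C_n → M^{(ℕ)} (n ∈ ℕ), the diagonal map γ : ⊕_{n∈ℕ} C_n → M^{(ℕ)} with γ∘ε_n = γ_n admits a homomorphism ψ : ⊕_{n∈ℕ} C_n → M^{(ℕ)} with ψ∘φ = γ. -/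
/-!
Restricting along the inclusions `εₙ`, surjectivity of `Hom(φ, N)` says that for every family
`γₙ : Cₙ → N` there are `ψₙ : Cₙ → N` with `ψₙ - ψₙ₊₁ ∘ fₙ = γₙ`, i.e. that `lim¹` of the tower
`(Hom(Cₙ, N))ₙ` vanishes.

* Mittag-Leffler implies surjectivity. As `Cₘ` is finitely generated, a map `Cₘ → M^{(I)}` is a
  finite sum of maps into single summands, so the Mittag-Leffler condition passes, with the same
  bounds, from `(Hom(Cₙ, M))ₙ` to `(Hom(Cₙ, M^{(I)}))ₙ` (`StableImages.hom_directSum`). A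
  Mittag-Leffler tower has vanishing `lim¹` (`StableImages.exists_sub_eq`): truncated sums solve the
  equations modulo the stable images, and these form a tower of surjections, along which the
  remaining error is removed recursively.
* Surjectivity for `M^{(ℕ)}` implies Mittag-Leffler (`stableImages_of_solvable`). If the images in
  `Hom(Cₘ, M)` do not stabilise, choose for each `n` a map `gₙ : Cₙ → M` whose restriction to `Cₘ`
  does not lift arbitrarily far, and solve the equations for `γₙ = εₙ ∘ gₙ`. The image of `ψₘ` has
  finite support, and at a coordinate `k` outside it the equations lift the restriction of `gₖ`
  arbitrarily far, a contradiction.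

To avoid transport along `m + (k + 1) = (m + 1) + k`, elements of iterated images are described by
threads `y : ∀ n, H n` that are compatible on an interval of indices.
-/

/-!
STATEMENT 8 (Corollary 2.3): for a countable direct system `(Cₙ, fₙ)` of finitely
generated modules, with `φ : ⊕ₙ Cₙ → ⊕ₙ Cₙ` given by `φ∘εₙ = εₙ - ε_{n+1}∘fₙ`,
and a module `M`, the following are equivalent: surjectivity of `Hom(φ, M^{(I)})`
for all sets `I`; surjectivity of `Hom(φ, M^{(ℕ)})`; the Mittag-Leffler condition
for the tower `(Hom(Cₙ, M), Hom(fₙ, M))`; and the factorization property for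
diagonal maps `⊕ₙ Cₙ → M^{(ℕ)}`.
-/

universe u

open DirectSum

variable {R : Type u} [Ring R]

/-- Composite `λ_m ∘ ⋯ ∘ λ_{m+k-1} : H_{m+k} → H_m` in a tower of abelian groups. -/
def towerComp {H : ℕ → Type v} [∀ n, AddCommGroup (H n)]
    (lam : ∀ n, H (n + 1) →+ H n) (m : ℕ) : (k : ℕ) → H (m + k) →+ H m
  | 0 => AddMonoidHom.id (H m)
  | k + 1 => (towerComp lam m k).comp (lam (m + k))

/-- The Mittag-Leffler condition: all the descending chains of images are stationary. -/
def MittagLeffler {H : ℕ → Type v} [∀ n, AddCommGroup (H n)]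
    (lam : ∀ n, H (n + 1) →+ H n) : Prop :=
  ∀ m, ∃ d, ∀ j, d ≤ j →
    Set.range ⇑(towerComp lam m j) = Set.range ⇑(towerComp lam m d)

/-- `Hom_R(fₙ, M) : Hom_R(C_{n+1}, M) → Hom_R(Cₙ, M)`, `g ↦ g ∘ fₙ`. -/
def homMap {C : ℕ → Type u} [∀ n, AddCommGroup (C n)] [∀ n, Module R (C n)]
    (f : ∀ n, C n →ₗ[R] C (n + 1)) (M : Type v) [AddCommGroup M] [Module R M]
    (n : ℕ) : (C (n + 1) →ₗ[R] M) →+ (C n →ₗ[R] M) where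
  toFun g := g.comp (f n)
  map_zero' := by ext x; simp
  map_add' g h := by ext x; simp

/-- The map `φ : ⊕ₙ Cₙ → ⊕ₙ Cₙ` determined by `φ ∘ εₙ = εₙ - ε_{n+1} ∘ fₙ`. -/
noncomputable def phiMap (R : Type u) [Ring R] (C : ℕ → Type u)
    [∀ n, AddCommGroup (C n)] [∀ n, Module R (C n)]
    (f : ∀ n, C n →ₗ[R] C (n + 1)) : (⨁ n, C n) →ₗ[R] ⨁ n, C n :=
  DirectSum.toModule R ℕ (⨁ n, C n)
    (fun n => DirectSum.lof R ℕ C n - (DirectSum.lof R ℕ C (n + 1)).comp (f n))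

/-! ### Towers of abelian groups -/

/-- The image of `H_N` in `H_m`, as the subgroup of those `x` that start a family `y` with `y m = x`
compatible with the transition maps between `m` and `N`. For `N ≤ m` it is all of `H_m`. -/
def threadImage {H : ℕ → Type v} [∀ n, AddCommGroup (H n)]
    (lam : ∀ n, H (n + 1) →+ H n) (m N : ℕ) : AddSubgroup (H m) where
  carrier := {x | ∃ y : ∀ n, H n, y m = x ∧ ∀ i, m ≤ i → i < N → lam i (y (i + 1)) = y i}
  zero_mem' := ⟨0, rfl, fun i _ _ => by simp⟩
  add_mem' := by
    rintro a b ⟨y, rfl, hy⟩ ⟨z, rfl, hz⟩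
    exact ⟨y + z, rfl, fun i h1 h2 => by simp [hy i h1 h2, hz i h1 h2]⟩
  neg_mem' := by
    rintro a ⟨y, rfl, hy⟩
    exact ⟨-y, rfl, fun i h1 h2 => by simp [hy i h1 h2]⟩

/-- The Mittag-Leffler condition in terms of `threadImage`. -/
def StableImages {H : ℕ → Type v} [∀ n, AddCommGroup (H n)]
    (lam : ∀ n, H (n + 1) →+ H n) : Prop :=
  ∀ m, ∃ D, ∀ N, D ≤ N → threadImage lam m D ≤ threadImage lam m N

section Towers

variable {H : ℕ → Type v} [∀ n, AddCommGroup (H n)] (lam : ∀ n, H (n + 1) →+ H n)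

theorem mem_threadImage {m N : ℕ} {x : H m} : x ∈ threadImage lam m N ↔
    ∃ y : ∀ n, H n, y m = x ∧ ∀ i, m ≤ i → i < N → lam i (y (i + 1)) = y i := Iff.rfl

theorem threadImage_anti (m : ℕ) {N N' : ℕ} (h : N ≤ N') :
    threadImage lam m N' ≤ threadImage lam m N := by
  rintro x ⟨y, hx, hy⟩
  exact ⟨y, hx, fun i h1 h2 => hy i h1 (h2.trans_le h)⟩

theorem map_mem_threadImage {n N : ℕ} {x : H (n + 1)} (hx : x ∈ threadImage lam (n + 1) N) :
    lam n x ∈ threadImage lam n N := by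
  obtain ⟨y, rfl, hy⟩ := hx
  refine ⟨Function.update y n (lam n (y (n + 1))), by simp, fun i h1 h2 => ?_⟩
  rcases h1.eq_or_lt with rfl | h1
  · simp
  · rw [Function.update_of_ne (by omega), Function.update_of_ne (by omega)]
    exact hy i h1 h2

theorem exists_lift_threadImage {n N : ℕ} (hn : n < N) {x : H n}
    (hx : x ∈ threadImage lam n N) : ∃ z ∈ threadImage lam (n + 1) N, lam n z = x := by
  obtain ⟨y, rfl, hy⟩ := hx
  exact ⟨y (n + 1), ⟨y, rfl, fun i h1 h2 => hy i (by omega) h2⟩, hy n le_rfl hn⟩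

theorem towerComp_thread (m k : ℕ) (y : ∀ n, H n)
    (hy : ∀ i, m ≤ i → i < m + k → lam i (y (i + 1)) = y i) :
    towerComp lam m k (y (m + k)) = y m := by
  induction k with
  | zero => rfl
  | succ k ih =>
    have h := hy (m + k) (by omega) (by omega)
    change towerComp lam m k (lam (m + k) (y (m + k + 1))) = y m
    rw [h]
    exact ih fun i h1 h2 => hy i h1 (by omega)

theorem exists_thread (m k : ℕ) (x : H (m + k)) : ∃ y : ∀ n, H n, y (m + k) = x ∧
    ∀ i, m ≤ i → i < m + k → lam i (y (i + 1)) = y i := by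
  induction k with
  | zero => exact ⟨Function.update 0 m x, by simp, fun i h1 h2 => by omega⟩
  | succ k ih =>
    obtain ⟨y, h0, hy⟩ := ih (lam (m + k) x)
    refine ⟨Function.update y (m + k + 1) x, Function.update_self .., fun i h1 h2 => ?_⟩
    rcases (show i ≤ m + k by omega).eq_or_lt with rfl | h2
    · rw [Function.update_self, Function.update_of_ne (by omega), h0]
    · rw [Function.update_of_ne (by omega), Function.update_of_ne (by omega)]
      exact hy i h1 h2

theorem range_towerComp (m k : ℕ) :
    Set.range (towerComp lam m k) = (threadImage lam m (m + k) : Set (H m)) := by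
  ext x
  constructor
  · rintro ⟨x, rfl⟩
    obtain ⟨y, rfl, hy⟩ := exists_thread lam m k x
    exact ⟨y, (towerComp_thread lam m k y hy).symm, hy⟩
  · rintro ⟨y, rfl, hy⟩
    exact ⟨y (m + k), towerComp_thread lam m k y hy⟩

theorem mittagLeffler_iff_stableImages : MittagLeffler lam ↔ StableImages lam := by
  refine forall_congr' fun m => ⟨?_, ?_⟩
  · rintro ⟨d, hd⟩
    refine ⟨m + d, fun N hN => ?_⟩
    obtain ⟨j, rfl⟩ := Nat.exists_eq_add_of_le (show m ≤ N by omega)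
    have h := hd j (by omega)
    rw [range_towerComp, range_towerComp] at h
    exact h.ge
  · rintro ⟨D, hD⟩
    refine ⟨D, fun j hj => ?_⟩
    rw [range_towerComp, range_towerComp]
    refine congrArg _ (le_antisymm (threadImage_anti lam m (by omega)) ?_)
    exact (threadImage_anti lam m (by omega)).trans (hD (m + j) (by omega))

/-- The equations `yₙ - λₙ yₙ₊₁ = γₙ` can be solved for finitely many `n`, by descending
recursion from `y_N = 0`. -/
theorem exists_truncated_solution (γ : ∀ n, H n) (N : ℕ) :
    ∃ y : ∀ n, H n, ∀ n < N, y n - lam n (y (n + 1)) = γ n := by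
  suffices h : ∀ k ≤ N, ∃ y : ∀ n, H n, ∀ n < N, N - k ≤ n → y n - lam n (y (n + 1)) = γ n by
    obtain ⟨y, hy⟩ := h N le_rfl
    exact ⟨y, fun n hn => hy n hn (by omega)⟩
  intro k
  induction k with
  | zero => exact fun _ => ⟨0, fun n h1 h2 => by omega⟩
  | succ k ih =>
    intro hk
    obtain ⟨y, hy⟩ := ih (by omega)
    obtain ⟨p, hp⟩ : ∃ p, N - (k + 1) = p := ⟨_, rfl⟩
    refine ⟨Function.update y p (γ p + lam p (y (p + 1))), fun n h1 h2 => ?_⟩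
    rcases (show p ≤ n by omega).eq_or_lt with rfl | h3
    · simp
    · rw [Function.update_of_ne (by omega), Function.update_of_ne (by omega)]
      exact hy n h1 (by omega)

/-- Two solutions of the first `N` equations differ by an element of the image of `H_N`. -/
theorem sub_mem_threadImage {γ y z : ∀ n, H n} {N : ℕ}
    (hy : ∀ n < N, y n - lam n (y (n + 1)) = γ n) (hz : ∀ n < N, z n - lam n (z (n + 1)) = γ n)
    (m : ℕ) : y m - z m ∈ threadImage lam m N := by
  refine ⟨y - z, rfl, fun i _ hi => ?_⟩
  have h := (hy i hi).trans (hz i hi).symm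
  simp only [Pi.sub_apply, map_sub]
  rw [sub_eq_sub_iff_sub_eq_sub] at h
  exact h.symm

/-- The derived limit `lim¹` of a Mittag-Leffler tower vanishes. -/
theorem StableImages.exists_sub_eq {lam : ∀ n, H (n + 1) →+ H n} (h : StableImages lam)
    (γ : ∀ n, H n) : ∃ ψ : ∀ n, H n, ∀ n, ψ n - lam n (ψ (n + 1)) = γ n := by
  choose D hD using h
  choose σ hσ using exists_truncated_solution lam γ
  -- `E n` lies beyond the stabilisation bounds of `H n` and `H (n + 1)`.
  let E : ℕ → ℕ := fun n => max (max (D n) (D (n + 1))) (n + 1)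
  have hE1 : ∀ n, D n ≤ E n := fun n => by simp [E]
  have hE2 : ∀ n, D (n + 1) ≤ E n := fun n => by simp [E]
  have hE3 : ∀ n, n < E n := fun n => by simp [E]
  have hmap : ∀ n, ∀ x ∈ threadImage lam (n + 1) (D (n + 1)),
      lam n x ∈ threadImage lam n (D n) := fun n x hx =>
    threadImage_anti lam n (hE1 n) (map_mem_threadImage lam (hD (n + 1) (E n) (hE2 n) hx))
  have hlift : ∀ n, ∀ x ∈ threadImage lam n (D n),
      ∃ z ∈ threadImage lam (n + 1) (D (n + 1)), lam n z = x := fun n x hx => by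
    obtain ⟨z, hz, hzx⟩ := exists_lift_threadImage lam (hE3 n) (hD n (E n) (hE1 n) hx)
    exact ⟨z, threadImage_anti lam _ (hE2 n) hz, hzx⟩
  have herr : ∀ n, γ n - (σ (D n) n - lam n (σ (D (n + 1)) (n + 1))) ∈
      threadImage lam n (D n) := fun n => by
    have h1 : σ (E n) n - σ (D n) n ∈ threadImage lam n (D n) :=
      sub_mem_threadImage lam (fun i hi => hσ _ i (hi.trans_le (hE1 n))) (hσ (D n)) n
    have h2 : σ (E n) (n + 1) - σ (D (n + 1)) (n + 1) ∈ threadImage lam (n + 1) (D (n + 1)) :=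
      sub_mem_threadImage lam (fun i hi => hσ _ i (hi.trans_le (hE2 n))) (hσ _) (n + 1)
    have h3 := sub_mem h1 (hmap n _ h2)
    rw [map_sub] at h3
    rw [← hσ (E n) n (hE3 n)]
    convert h3 using 1
    abel
  choose! L hL1 hL2 using hlift
  -- Correction terms in the stable images: `t (n + 1)` lifts `t n` minus the error at `n`.
  let t : ∀ n, threadImage lam n (D n) := fun n => Nat.rec (motive := fun n =>
      threadImage lam n (D n)) 0
    (fun n tn => ⟨L n (tn.1 - (γ n - (σ (D n) n - lam n (σ (D (n + 1)) (n + 1))))),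
      hL1 n _ (sub_mem tn.2 (herr n))⟩) n
  have ht : ∀ n, lam n (t (n + 1)).1 =
      (t n).1 - (γ n - (σ (D n) n - lam n (σ (D (n + 1)) (n + 1)))) := fun n =>
    hL2 n _ (sub_mem (t n).2 (herr n))
  refine ⟨fun n => σ (D n) n + (t n).1, fun n => ?_⟩
  have habel : ∀ a b c d : H n, a + b - (d + (b - (c - (a - d)))) = c := by
    intros
    abel
  rw [map_add, ht n]
  exact habel _ _ _ _

end Towers

/-! ### Towers of homomorphisms -/

section Hom

variable {C : ℕ → Type u} [∀ n, AddCommGroup (C n)] [∀ n, Module R (C n)]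
  (f : ∀ n, C n →ₗ[R] C (n + 1))

theorem homMap_apply (M : Type v) [AddCommGroup M] [Module R M] (n : ℕ) (g : C (n + 1) →ₗ[R] M) :
    homMap f M n g = g.comp (f n) := rfl

theorem comp_mem_threadImage {M M' : Type*} [AddCommGroup M] [Module R M] [AddCommGroup M']
    [Module R M'] (u : M →ₗ[R] M') {m N : ℕ} {x : C m →ₗ[R] M}
    (hx : x ∈ threadImage (H := fun n => C n →ₗ[R] M) (homMap f M) m N) :
    u.comp x ∈ threadImage (H := fun n => C n →ₗ[R] M') (homMap f M') m N := by
  obtain ⟨y, rfl, hy⟩ := hx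
  refine ⟨fun n => u.comp (y n), rfl, fun i h1 h2 => ?_⟩
  simp only
  rw [← hy i h1 h2]
  rfl

theorem exists_finset_support {I A M : Type*} [AddCommGroup A] [Module R A] [Module.Finite R A]
    [AddCommGroup M] [Module R M] (x : A →ₗ[R] ⨁ _ : I, M) :
    ∃ S : Finset I, ∀ i ∉ S, (DirectSum.component R I (fun _ => M) i).comp x = 0 := by
  classical
  obtain ⟨T, hT⟩ := Module.Finite.fg_top (R := R) (M := A)
  refine ⟨T.biUnion fun a => DFinsupp.support (x a), fun i hi => ?_⟩
  refine LinearMap.ext_on hT fun a ha => ?_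
  by_contra hne
  exact hi (Finset.mem_biUnion.2 ⟨a, ha, DFinsupp.mem_support_iff.2 hne⟩)

/-- The Mittag-Leffler condition passes from `Hom(Cₙ, M)` to `Hom(Cₙ, M^{(I)})`: every element of
the latter is a finite sum of maps into single summands. -/
theorem StableImages.hom_directSum [∀ n, Module.Finite R (C n)] {M : Type u} [AddCommGroup M]
    [Module R M] (h : StableImages (H := fun n => C n →ₗ[R] M) (homMap f M)) (I : Type) :
    StableImages (H := fun n => C n →ₗ[R] ⨁ _ : I, M) (homMap f (⨁ _ : I, M)) := by
  classical
  intro m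
  obtain ⟨D, hD⟩ := h m
  refine ⟨D, fun N hN x hx => ?_⟩
  obtain ⟨S, hS⟩ := exists_finset_support x
  have hsum : x = ∑ i ∈ S, (DirectSum.lof R I (fun _ => M) i).comp
      ((DirectSum.component R I (fun _ => M) i).comp x) := by
    refine LinearMap.ext fun c => DFinsupp.ext fun j => ?_
    change DirectSum.component R I (fun _ => M) j (x c) = DirectSum.component R I (fun _ => M) j _
    simp only [LinearMap.sum_apply, map_sum, LinearMap.comp_apply, DirectSum.component.of]
    by_cases hj : j ∈ S
    · rw [Finset.sum_eq_single_of_mem j hj fun b _ hb => dif_neg hb]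
      simp
    · rw [Finset.sum_eq_zero fun b hb => dif_neg (show b ≠ j from fun hbj => hj (hbj ▸ hb))]
      exact LinearMap.congr_fun (hS j hj) c
  rw [hsum]
  exact sum_mem fun i _ => comp_mem_threadImage f _ (hD N hN (comp_mem_threadImage f _ hx))

/-- Solvability of `ψₙ - ψₙ₊₁ ∘ fₙ = γₙ` in `Hom(Cₙ, M^{(ℕ)})` forces the Mittag-Leffler
condition on `Hom(Cₙ, M)`. -/
theorem stableImages_of_solvable [∀ n, Module.Finite R (C n)] {M : Type u} [AddCommGroup M]
    [Module R M] (h : ∀ γ : ∀ n, C n →ₗ[R] ⨁ _ : ℕ, M, ∃ ψ : ∀ n, C n →ₗ[R] ⨁ _ : ℕ, M,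
      ∀ n, ψ n - (ψ (n + 1)).comp (f n) = γ n) :
    StableImages (H := fun n => C n →ₗ[R] M) (homMap f M) := by
  intro m
  by_contra hcon
  push Not at hcon
  have hbad : ∀ k, ∃ N, ∃ y : ∀ n, C n →ₗ[R] M,
      (∀ i, m ≤ i → i < k → homMap f M i (y (i + 1)) = y i) ∧
      y m ∉ threadImage (H := fun n => C n →ₗ[R] M) (homMap f M) m N := fun k => by
    obtain ⟨N, _, hN⟩ := hcon k
    obtain ⟨x, ⟨y, rfl, hy⟩, hx⟩ := SetLike.not_le_iff_exists.1 hN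
    exact ⟨N, y, hy, hx⟩
  choose N y hy hyN using hbad
  obtain ⟨ψ, hψ⟩ := h fun n => (DirectSum.lof R ℕ (fun _ => M) n).comp (y n n)
  obtain ⟨S, hS⟩ := exists_finset_support (ψ m)
  obtain ⟨k, hk⟩ := Infinite.exists_notMem_finset (S ∪ Finset.range m)
  simp only [Finset.mem_union, Finset.mem_range, not_or, not_lt] at hk
  obtain ⟨p, hp⟩ : ∃ p : ∀ n, C n →ₗ[R] M,
      p = fun n => (DirectSum.component R ℕ (fun _ => M) k).comp (ψ n) := ⟨_, rfl⟩
  have hpm : p m = 0 := by rw [hp]; exact hS k hk.1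
  have hpn : ∀ n, p n - (p (n + 1)).comp (f n) = if n = k then y n n else 0 := fun n => by
    have h1 := congrArg (fun g => (DirectSum.component R ℕ (fun _ => M) k).comp g) (hψ n)
    simp only [LinearMap.comp_sub] at h1
    rw [hp]
    refine h1.trans (LinearMap.ext fun c => ?_)
    simp only [LinearMap.comp_apply, DirectSum.component.of]
    split_ifs <;> simp
  -- The `k`-th coordinates `p` of the solution continue the thread `y k` beyond the index `k`.
  refine hyN k ⟨fun n => if n ≤ k then y k n - p n else - p n, ?_, fun i hi _ => ?_⟩
  · simp [hk.2, hpm]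
  · have h1 := hpn i
    rw [homMap_apply]
    rcases lt_trichotomy i k with hik | rfl | hik
    · have h2 := hy k i hi hik
      rw [homMap_apply] at h2
      rw [if_neg hik.ne, sub_eq_zero] at h1
      simp only [if_pos hik.le, if_pos (show i + 1 ≤ k from hik), LinearMap.sub_comp, h2, ← h1]
    · rw [if_pos rfl] at h1
      simp only [le_refl, if_true, if_neg (show ¬ i + 1 ≤ i by omega), LinearMap.neg_comp, ← h1]
      abel
    · rw [if_neg hik.ne', sub_eq_zero] at h1
      simp only [if_neg (show ¬ i ≤ k by omega), if_neg (show ¬ i + 1 ≤ k by omega),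
        LinearMap.neg_comp, ← h1]

theorem comp_phiMap_comp_lof {M : Type*} [AddCommGroup M] [Module R M]
    (g : (⨁ n, C n) →ₗ[R] M) (n : ℕ) :
    (g.comp (phiMap R C f)).comp (DirectSum.lof R ℕ C n) =
      g.comp (DirectSum.lof R ℕ C n) - (g.comp (DirectSum.lof R ℕ C (n + 1))).comp (f n) := by
  refine LinearMap.ext fun c => ?_
  simp [phiMap]

theorem surjective_comp_phiMap_iff {M : Type*} [AddCommGroup M] [Module R M] :
    Function.Surjective (fun g : (⨁ n, C n) →ₗ[R] M => g.comp (phiMap R C f)) ↔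
      ∀ γ : ∀ n, C n →ₗ[R] M, ∃ ψ : ∀ n, C n →ₗ[R] M,
        ∀ n, ψ n - (ψ (n + 1)).comp (f n) = γ n := by
  have hlof : ∀ (γ : ∀ n, C n →ₗ[R] M) (n : ℕ),
      (DirectSum.toModule R ℕ M γ).comp (DirectSum.lof R ℕ C n) = γ n := fun γ n =>
    LinearMap.ext fun c => by simp
  constructor
  · intro h γ
    obtain ⟨g, hg⟩ := h (DirectSum.toModule R ℕ M γ)
    refine ⟨fun n => g.comp (DirectSum.lof R ℕ C n), fun n => ?_⟩
    rw [← comp_phiMap_comp_lof, ← hlof γ n, ← hg]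
  · intro h γ
    obtain ⟨ψ, hψ⟩ := h fun n => γ.comp (DirectSum.lof R ℕ C n)
    refine ⟨DirectSum.toModule R ℕ M ψ, DirectSum.linearMap_ext R fun n => ?_⟩
    simp only [comp_phiMap_comp_lof, hlof, hψ]

end Hom

theorem hom_phi_surjective_iff_MittagLeffler
    (C : ℕ → Type u) [∀ n, AddCommGroup (C n)] [∀ n, Module R (C n)]
    [∀ n, Module.Finite R (C n)] (f : ∀ n, C n →ₗ[R] C (n + 1))
    (M : Type u) [AddCommGroup M] [Module R M] :
    ((∀ I : Type, Function.Surjective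
        (fun g : (⨁ n, C n) →ₗ[R] (⨁ _ : I, M) => g.comp (phiMap R C f))) ↔
      Function.Surjective
        (fun g : (⨁ n, C n) →ₗ[R] (⨁ _ : ℕ, M) => g.comp (phiMap R C f))) ∧
    (Function.Surjective
        (fun g : (⨁ n, C n) →ₗ[R] (⨁ _ : ℕ, M) => g.comp (phiMap R C f)) ↔
      MittagLeffler (H := fun n => C n →ₗ[R] M) (homMap f M)) ∧
    (MittagLeffler (H := fun n => C n →ₗ[R] M) (homMap f M) ↔
      ∀ (γfam : ∀ n, C n →ₗ[R] ⨁ _ : ℕ, M) (γ : (⨁ n, C n) →ₗ[R] ⨁ _ : ℕ, M),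
        (∀ n, γ.comp (DirectSum.lof R ℕ C n) = γfam n) →
        ∃ ψ : (⨁ n, C n) →ₗ[R] ⨁ _ : ℕ, M, ψ.comp (phiMap R C f) = γ) := by
  have h31 : MittagLeffler (H := fun n => C n →ₗ[R] M) (homMap f M) →
      ∀ I : Type, Function.Surjective
        (fun g : (⨁ n, C n) →ₗ[R] (⨁ _ : I, M) => g.comp (phiMap R C f)) := fun h I =>
    (surjective_comp_phiMap_iff f).2
      (((mittagLeffler_iff_stableImages _).1 h).hom_directSum f I).exists_sub_eq
  have h23 : Function.Surjective
        (fun g : (⨁ n, C n) →ₗ[R] (⨁ _ : ℕ, M) => g.comp (phiMap R C f)) →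
      MittagLeffler (H := fun n => C n →ₗ[R] M) (homMap f M) := fun h =>
    (mittagLeffler_iff_stableImages _).2
      (stableImages_of_solvable f ((surjective_comp_phiMap_iff f).1 h))
  exact ⟨⟨fun h => h ℕ, fun h => h31 (h23 h)⟩, ⟨h23, fun h => h31 h ℕ⟩,
    fun h _ γ _ => h31 h ℕ γ, fun h => h23 fun γ => h _ γ fun _ => rfl⟩
end

section
/- Let R be a ring, let C₁ →^{f₁} C₂ →^{f₂} C₃ → ⋯ be a countable direct system of finitely presented R-modules, and let M be an R-module such that the tower (Hom_R(C_n, M), Hom_R(f_n, M))_{n∈ℕ} satisfies the Mittag-Leffler condition. Then for every pure submodule N of M, the tower (Hom_R(C_n, N), Hom_R(f_n, N))_{n∈ℕ} also satisfies the Mittag-Leffler condition. -/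
/-!
A homomorphism `g : A → N` from a finitely generated module factors through
`φ : A → B`, with `B` finitely presented, if and only if certain finitely many linear equations
with constants in `N` are solvable in `N`: the unknowns are the images of the generators of `B`, and
the equations are the relations of `B` together with the prescribed values `g a` on generators `a`
of `A`. By purity (`Submodule.IsPureIn.exists_factor`), `g` therefore factors through `φ` as soon as
its composite with `N → M` does.

Apply this to the transition maps `C m → C (m + j)`. If the images in `Hom(C m, M)` are constant
from stage `d` on, then an element of `Hom(C m, N)` coming from stage `d` factors over `M` through
every later `C (m + j)`, hence over `N`; so the same `d` works for `N`.
-/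

/-!
STATEMENT 15 (Proposition 2.9): let `(Cₙ, fₙ)` be a countable direct system of
finitely presented modules and `M` a module such that the tower
`(Hom(Cₙ, M), Hom(fₙ, M))` satisfies the Mittag-Leffler condition.  Then for every
pure submodule `N` of `M` the tower `(Hom(Cₙ, N), Hom(fₙ, N))` also satisfies the
Mittag-Leffler condition.

Since the tensor product over a noncommutative ring is not available in Mathlib,
purity of the submodule `N ≤ M` is expressed through the standard equational
characterization, which is equivalent to the injectivity of `N ⊗_R G → M ⊗_R G`
for all finitely presented `G`.
-/

universe u

variable {R : Type u} [Ring R]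

/-- Equational characterization of purity of the submodule `N` of `M`. -/
def Submodule.IsPureIn {M : Type u} [AddCommGroup M]
    [Module R M] (N : Submodule R M) : Prop :=
  ∀ (m n : ℕ) (a : Fin m → Fin n → R) (x : Fin m → M),
    (∀ i, x i ∈ N) →
    (∃ y : Fin n → M, ∀ i, (∑ j, a i j • y j) = x i) →
    ∃ z : Fin n → M, (∀ j, z j ∈ N) ∧ ∀ i, (∑ j, a i j • z j) = x i

/-- Purity for finite systems of equations with coefficient rows `w i` and constants `x i`,
over an arbitrary finite index type. -/
lemma Submodule.IsPureIn.exists_solution {M : Type u} [AddCommGroup M] [Module R M]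
    {N : Submodule R M} (hN : N.IsPureIn) {ι : Type*} [Finite ι] {n : ℕ}
    (w : ι → Fin n → R) (x : ι → N) (y : Fin n → M)
    (h : ∀ i, Fintype.linearCombination R y (w i) = x i) :
    ∃ z : Fin n → N, ∀ i, Fintype.linearCombination R z (w i) = x i := by
  obtain ⟨m, ⟨e⟩⟩ := Finite.exists_equiv_fin ι
  obtain ⟨z, hz, hzx⟩ := hN m n (fun i => w (e.symm i)) (fun i => x (e.symm i))
    (fun i => (x _).2) ⟨y, fun i => by simpa [Fintype.linearCombination_apply] using h (e.symm i)⟩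
  refine ⟨fun j => ⟨z j, hz j⟩, fun i => Subtype.ext ?_⟩
  simpa [Fintype.linearCombination_apply] using hzx (e i)

/-- If `g : A → N`, viewed as a map to `M`, factors through `φ : A → B`, then by purity it already
does so over `N`. -/
lemma Submodule.IsPureIn.exists_factor {M : Type u} [AddCommGroup M] [Module R M]
    {N : Submodule R M} (hN : N.IsPureIn) {A B : Type u} [AddCommGroup A] [Module R A]
    [AddCommGroup B] [Module R B] [Module.Finite R A] [Module.FinitePresentation R B]
    (φ : A →ₗ[R] B) (g : A →ₗ[R] N) (h : B →ₗ[R] M) (hg : h ∘ₗ φ = N.subtype ∘ₗ g) :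
    ∃ k : B →ₗ[R] N, k ∘ₗ φ = g := by
  classical
  obtain ⟨n, K, e, s, hs⟩ := Module.FinitePresentation.exists_fin R B
  obtain ⟨t, ht⟩ := Module.Finite.fg_top (R := R) (M := A)
  let π : (Fin n → R) →ₗ[R] B := e.symm.toLinearMap ∘ₗ K.mkQ
  have hπ : Function.Surjective π := e.symm.surjective.comp K.mkQ_surjective
  choose b hb using fun a : A => hπ (φ a)
  -- The images under `h` of the generators of `B` solve the system in `M`.
  let y : Fin n → M := fun j => h (π (Pi.single j 1))
  have hy : Fintype.linearCombination R y = h ∘ₗ π := by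
    refine LinearMap.pi_ext' fun j => LinearMap.ext_ring ?_
    simp [y]
  obtain ⟨z, hz⟩ := hN.exists_solution (ι := t ⊕ s)
    (Sum.elim (fun a => b a) (fun r => (r : Fin n → R)))
    (Sum.elim (fun a => g a) (fun _ => 0)) y (by
      rintro (a | r)
      · simpa [hy, hb] using LinearMap.congr_fun hg (a : A)
      · have hr : (r : Fin n → R) ∈ K := hs ▸ Submodule.subset_span r.2
        simp [hy, π, (Submodule.Quotient.mk_eq_zero K).2 hr])
  have hK : K ≤ LinearMap.ker (Fintype.linearCombination R z) := by
    rw [← hs, Submodule.span_le]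
    intro r hr
    simpa using hz (Sum.inr ⟨r, hr⟩)
  refine ⟨K.liftQ _ hK ∘ₗ e.toLinearMap, LinearMap.ext_on ht fun a ha => ?_⟩
  have h1 : e (φ a) = K.mkQ (b a) := by
    rw [← hb a]; simp [π]
  simpa [h1] using hz (Sum.inl ⟨a, ha⟩)

/-- The transition map `C m → C (m + k)` of the direct system. -/
def transition {C : ℕ → Type u} [∀ n, AddCommGroup (C n)] [∀ n, Module R (C n)]
    (f : ∀ n, C n →ₗ[R] C (n + 1)) (m : ℕ) : (k : ℕ) → C m →ₗ[R] C (m + k)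
  | 0 => LinearMap.id
  | k + 1 => f (m + k) ∘ₗ transition f m k

lemma towerComp_homMap {C : ℕ → Type u} [∀ n, AddCommGroup (C n)] [∀ n, Module R (C n)]
    (f : ∀ n, C n →ₗ[R] C (n + 1)) (M : Type u) [AddCommGroup M] [Module R M] (m k : ℕ)
    (g : C (m + k) →ₗ[R] M) :
    towerComp (H := fun n => C n →ₗ[R] M) (homMap f M) m k g = g ∘ₗ transition f m k := by
  induction k with
  | zero => rfl
  | succ k ih => exact ih (g ∘ₗ f (m + k))

lemma antitone_range_towerComp {H : ℕ → Type u} [∀ n, AddCommGroup (H n)]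
    (lam : ∀ n, H (n + 1) →+ H n) (m : ℕ) :
    Antitone fun k => Set.range (towerComp lam m k) := by
  refine antitone_nat_of_succ_le fun k => ?_
  rintro _ ⟨x, rfl⟩
  exact ⟨lam (m + k) x, rfl⟩

theorem MittagLeffler_of_pure_submodule
    (C : ℕ → Type u) [∀ n, AddCommGroup (C n)] [∀ n, Module R (C n)]
    [∀ n, Module.FinitePresentation R (C n)]
    (f : ∀ n, C n →ₗ[R] C (n + 1))
    (M : Type u) [AddCommGroup M] [Module R M]
    (hM : MittagLeffler (H := fun n => C n →ₗ[R] M) (homMap f M))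
    (N : Submodule R M) (hN : N.IsPureIn) :
    MittagLeffler (H := fun n => C n →ₗ[R] N) (homMap f N) := by
  intro m
  obtain ⟨d, hd⟩ := hM m
  refine ⟨d, fun j hj => (antitone_range_towerComp _ m hj).antisymm ?_⟩
  rintro _ ⟨g, rfl⟩
  obtain ⟨h, hh⟩ : towerComp (H := fun n => C n →ₗ[R] M) (homMap f M) m d (N.subtype ∘ₗ g) ∈
      Set.range (towerComp (H := fun n => C n →ₗ[R] M) (homMap f M) m j) :=
    hd j hj ▸ ⟨_, rfl⟩
  rw [towerComp_homMap, towerComp_homMap, LinearMap.comp_assoc] at hh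
  obtain ⟨k, hk⟩ := hN.exists_factor _ _ h hh
  exact ⟨k, by rw [towerComp_homMap, towerComp_homMap, hk]⟩
end
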